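/- arXiv:2303.12632 — 2 statements merged into one kernel-verified Lean document; each statement's English description precedes it below -/
import Mathlib

section
/- Let Δ and d be integers with 0 ≤ d ≤ Δ−1. The complete bipartite graph K_{Δ,d+1}, which has n = Δ+d+1 vertices, m = Δ(d+1) edges, and maximum degree Δ, satisfies 2Δd/(Δ+d) ≤ 2m/n ≤ 2Δ(d+1)/(Δ+d+1) and irr(K_{Δ,d+1}) = d(d+1)·n + (1/Δ)·(Δ² − (2d+1)Δ − d² − d)·m, i.e., the bound of the main theorem holds with equality for K_{Δ,d+1} with parameter d. -/
open Finset SimpleGraph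

/-- The irregularity of a graph: `irr G = ∑_{uv ∈ E(G)} |d_G(u) - d_G(v)|`. -/
def irr {V : Type*} [Fintype V] (G : SimpleGraph V) [DecidableRel G.Adj] : ℤ :=
  ∑ e ∈ G.edgeFinset, Sym2.lift ⟨fun u v => |(G.degree u : ℤ) - (G.degree v : ℤ)|,
    fun u v => by simp [abs_sub_comm]⟩ e

instance {α β : Type*} : DecidableRel (completeBipartiteGraph α β).Adj := fun v w => by
  simp only [completeBipartiteGraph]; infer_instance

lemma cb_degree_inl (a b : ℕ) (v : Fin a) :
    (completeBipartiteGraph (Fin a) (Fin b)).degree (Sum.inl v) = b := by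
  have : (completeBipartiteGraph (Fin a) (Fin b)).neighborFinset (Sum.inl v) =
      (Finset.univ : Finset (Fin b)).map ⟨Sum.inr, Sum.inr_injective⟩ := by
    ext x
    rcases x with x | x <;> simp
  rw [← SimpleGraph.card_neighborFinset_eq_degree, this]
  simp

lemma cb_degree_inr (a b : ℕ) (v : Fin b) :
    (completeBipartiteGraph (Fin a) (Fin b)).degree (Sum.inr v) = a := by
  have : (completeBipartiteGraph (Fin a) (Fin b)).neighborFinset (Sum.inr v) =
      (Finset.univ : Finset (Fin a)).map ⟨Sum.inl, Sum.inl_injective⟩ := by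
    ext x
    rcases x with x | x <;> simp
  rw [← SimpleGraph.card_neighborFinset_eq_degree, this]
  simp

lemma cb_card (a b : ℕ) :
    (completeBipartiteGraph (Fin a) (Fin b)).edgeFinset.card = a * b := by
  have h := (completeBipartiteGraph (Fin a) (Fin b)).sum_degrees_eq_twice_card_edges
  simp only [Fintype.sum_sum_type, cb_degree_inl, cb_degree_inr, Finset.sum_const,
    Finset.card_univ, Fintype.card_fin, smul_eq_mul] at h
  nlinarith

lemma cb_irr (a b : ℕ) :
    irr (completeBipartiteGraph (Fin a) (Fin b)) = a * b * |(a : ℤ) - b| := by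
  unfold irr
  rw [Finset.sum_congr rfl (g := fun _ => |(a : ℤ) - b|), Finset.sum_const, cb_card]
  · simp
  · intro e he
    induction e using Sym2.ind with
    | _ u v =>
      rw [SimpleGraph.mem_edgeFinset, SimpleGraph.mem_edgeSet] at he
      rcases u with u | u <;> rcases v with v | v <;> simp at he
      · simp only [Sym2.lift_mk, cb_degree_inl, cb_degree_inr]
        exact abs_sub_comm _ _
      · simp only [Sym2.lift_mk, cb_degree_inl, cb_degree_inr]

theorem stmt_12 (Δ d : ℕ) (hdΔ : d < Δ)
    (n m : ℕ) (hn : n = Δ + d + 1) (hm : m = Δ * (d + 1)) :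
    Fintype.card (Fin Δ ⊕ Fin (d + 1)) = n ∧
    (completeBipartiteGraph (Fin Δ) (Fin (d + 1))).edgeFinset.card = m ∧
    (∀ v, (completeBipartiteGraph (Fin Δ) (Fin (d + 1))).degree v ≤ Δ) ∧
    (∃ v, (completeBipartiteGraph (Fin Δ) (Fin (d + 1))).degree v = Δ) ∧
    2 * (Δ : ℝ) * d / ((Δ : ℝ) + d) ≤ 2 * (m : ℝ) / n ∧
    2 * (m : ℝ) / n ≤ 2 * (Δ : ℝ) * (d + 1) / ((Δ : ℝ) + d + 1) ∧
    (irr (completeBipartiteGraph (Fin Δ) (Fin (d + 1))) : ℝ) =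
      (d : ℝ) * (d + 1) * n +
        (1 / (Δ : ℝ)) * ((Δ : ℝ) ^ 2 - (2 * d + 1) * Δ - (d : ℝ) ^ 2 - d) * m := by
  subst hn hm
  have hΔ : (0 : ℝ) < Δ := by exact_mod_cast (by omega : 0 < Δ)
  have hd : (0 : ℝ) ≤ d := by positivity
  have hle : (d : ℝ) + 1 ≤ Δ := by exact_mod_cast hdΔ
  refine ⟨by simp [add_assoc], cb_card _ _, ?_, ⟨Sum.inr 0, cb_degree_inr _ _ _⟩, ?_, ?_, ?_⟩
  · rintro (v | v)
    · rw [cb_degree_inl]; omega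
    · rw [cb_degree_inr]
  · push_cast
    rw [div_le_div_iff₀ (by positivity) (by positivity)]
    have : 0 ≤ (Δ : ℝ) * Δ * Δ := by positivity
    nlinarith [mul_pos hΔ hΔ]
  · push_cast
    rw [mul_assoc]
  · rw [cb_irr]
    push_cast
    rw [abs_of_nonneg (by linarith)]
    field_simp
    ring
end

section
/- Let Δ > δ ≥ 0 be integers and let δ* ∈ {δ, ..., Δ} be an integer maximizing Δ(Δ−i)i/(Δ+i) over i ∈ {δ, ..., Δ}, and suppose δ* ≥ 1 and δ* < Δ. The complete bipartite graph K_{Δ,δ*}, which has n = Δ+δ* vertices, maximum degree Δ, and minimum degree δ* ≥ δ, satisfies irr(K_{Δ,δ*}) = (Δ(Δ−δ*)δ*/(Δ+δ*))·n, i.e., the bound of Proposition 1 holds with equality for K_{Δ,δ*}. -/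
open Finset SimpleGraph

lemma deg_inl (a b : ℕ) (x : Fin a) :
    (completeBipartiteGraph (Fin a) (Fin b)).degree (Sum.inl x) = b := by
  rw [← card_neighborFinset_eq_degree]
  have : (completeBipartiteGraph (Fin a) (Fin b)).neighborFinset (Sum.inl x)
      = Finset.univ.map Function.Embedding.inr := by
    ext v; cases v <;> simp
  rw [this]; simp

lemma deg_inr (a b : ℕ) (x : Fin b) :
    (completeBipartiteGraph (Fin a) (Fin b)).degree (Sum.inr x) = a := by
  rw [← card_neighborFinset_eq_degree]
  have : (completeBipartiteGraph (Fin a) (Fin b)).neighborFinset (Sum.inr x)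
      = Finset.univ.map Function.Embedding.inl := by
    ext v; cases v <;> simp
  rw [this]; simp

lemma irr_bip (a b : ℕ) (h : b ≤ a) :
    irr (completeBipartiteGraph (Fin a) (Fin b)) = (a : ℤ) * b * (a - b) := by
  have hs : (completeBipartiteGraph (Fin a) (Fin b)).edgeFinset.card = a * b := by
    have h1 := (completeBipartiteGraph (Fin a) (Fin b)).sum_degrees_eq_twice_card_edges
    rw [Fintype.sum_sum_type] at h1
    simp only [deg_inl, deg_inr, Finset.sum_const, Finset.card_univ, Fintype.card_fin,
      smul_eq_mul] at h1
    have : b * a = a * b := Nat.mul_comm _ _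
    omega
  have hab : (0 : ℤ) ≤ (a : ℤ) - b := by omega
  unfold irr
  rw [Finset.sum_congr rfl (g := fun _ => (a : ℤ) - b)]
  · rw [Finset.sum_const, hs]; simp
  · intro e he
    induction e using Sym2.ind with
    | _ u v =>
      rw [mem_edgeFinset, mem_edgeSet] at he
      rw [Sym2.lift_mk]
      rcases u with u | u <;> rcases v with v | v
      · simp at he
      · simp only [deg_inl, deg_inr]; rw [abs_sub_comm, abs_of_nonneg hab]
      · simp only [deg_inl, deg_inr]; rw [abs_of_nonneg hab]
      · simp at he

theorem stmt_13 (Δ δ : ℕ) (hδΔ : δ < Δ)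
    (δs : ℕ) (hδs₁ : δ ≤ δs) (hδs₂ : δs ≤ Δ)
    (hδsmax : ∀ i : ℕ, δ ≤ i → i ≤ Δ →
      (Δ : ℝ) * ((Δ : ℝ) - i) * i / ((Δ : ℝ) + i) ≤
        (Δ : ℝ) * ((Δ : ℝ) - δs) * δs / ((Δ : ℝ) + δs))
    (hδs₃ : 1 ≤ δs) (hδs₄ : δs < Δ)
    (n : ℕ) (hn : n = Δ + δs) :
    Fintype.card (Fin Δ ⊕ Fin δs) = n ∧
    (∀ v, (completeBipartiteGraph (Fin Δ) (Fin δs)).degree v ≤ Δ) ∧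
    (∃ v, (completeBipartiteGraph (Fin Δ) (Fin δs)).degree v = Δ) ∧
    (∀ v, δ ≤ (completeBipartiteGraph (Fin Δ) (Fin δs)).degree v) ∧
    (irr (completeBipartiteGraph (Fin Δ) (Fin δs)) : ℝ) =
      (Δ : ℝ) * ((Δ : ℝ) - δs) * δs / ((Δ : ℝ) + δs) * n := by
  refine ⟨by simp [hn], ?_, ⟨Sum.inr ⟨0, hδs₃⟩, deg_inr _ _ _⟩, ?_, ?_⟩
  · rintro (v | v)
    · rw [deg_inl]; exact hδs₂
    · rw [deg_inr]
  · rintro (v | v)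
    · rw [deg_inl]; exact hδs₁
    · rw [deg_inr]; exact hδΔ.le
  · rw [irr_bip _ _ hδs₂, hn]
    have : (Δ : ℝ) + δs ≠ 0 := by
      have : 0 < Δ + δs := by omega
      exact_mod_cast this.ne'
    push_cast
    field_simp
end
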